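/- Unbiasedness of the one-point gradient estimator (Lemma 1, one-point case): Let f : ℝ^d → ℝ be Lipschitz continuous and bounded, and let δ > 0. Define the smoothed function f̌(x) := E_v[ f(x + δv) ], where v is uniformly distributed on the closed unit ball B = {v ∈ ℝ^d : ‖v‖ ≤ 1}. Then f̌ is differentiable on ℝ^d and for every x ∈ ℝ^d, ∇f̌(x) = E_u[ (d/δ) f(x + δu) u ], where u is uniformly distributed on the unit sphere S = {u ∈ ℝ^d : ‖u‖ = 1}. -/

import Mathlib

open MeasureTheory Metric

/-- The uniform (normalized Lebesgue) probability measure on the closed unit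
ball of `ℝ^d`. -/
noncomputable def ballUniform (d : ℕ) : Measure (EuclideanSpace ℝ (Fin d)) :=
  (volume (closedBall (0 : EuclideanSpace ℝ (Fin d)) 1))⁻¹ •
    volume.restrict (closedBall (0 : EuclideanSpace ℝ (Fin d)) 1)

/-- The uniform (normalized surface) probability measure on the unit sphere of
`ℝ^d`, viewed as a measure on `ℝ^d`. -/
noncomputable def sphereUniform (d : ℕ) : Measure (EuclideanSpace ℝ (Fin d)) :=
  Measure.map Subtype.val
    (((volume : Measure (EuclideanSpace ℝ (Fin d))).toSphere Set.univ)⁻¹ •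
      (volume : Measure (EuclideanSpace ℝ (Fin d))).toSphere)

/-!
The ball average of a merely continuous `f` is differentiable although `f` is not: the divergence
theorem turns its gradient into a flux through the sphere. To get this without smoothness, integrate
`f` against the tent `(R - ‖v‖)⁺`. The derivative of this integral in the height `R` is the integral
of `f` over the ball of radius `R`, while its derivative in the centre falls on the Lipschitz tent
and, in polar coordinates, is the integral over `r ∈ [0, R]` of the flux through the sphere of
radius `r`. Difference quotients in `R` of the latter converge locally uniformly in the centre, so
the two derivatives may be interchanged, and the ball integral has the flux as its derivative.
-/

open Set Filter Module Topology

section NormedSpace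

variable {E : Type*} [NormedAddCommGroup E] [NormedSpace ℝ E] [FiniteDimensional ℝ E]
  [MeasurableSpace E] [BorelSpace E] (μ : Measure E) [μ.IsAddHaarMeasure]

theorem integral_eq_integral_Ioi_integral_sphere [Nontrivial E] {F : Type*}
    [NormedAddCommGroup F] [NormedSpace ℝ F] {g : E → F} (hg : Integrable g μ) :
    ∫ v, g v ∂μ = ∫ r in Ioi (0 : ℝ), r ^ (finrank ℝ E - 1) •
      ∫ u : sphere (0 : E) 1, g (r • (u : E)) ∂μ.toSphere := by
  set polar := homeomorphUnitSphereProd E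
  set G : sphere (0 : E) 1 × Ioi (0 : ℝ) → F := fun p => g ((p.2 : ℝ) • (p.1 : E))
  have hpolar := μ.measurePreserving_homeomorphUnitSphereProd
  have hG : G ∘ polar = g ∘ Subtype.val := by
    ext x
    have hx : ‖(x : E)‖ ≠ 0 := norm_ne_zero_iff.2 x.2
    simp [G, polar, smul_smul, hx]
  have hGint : Integrable G (μ.toSphere.prod (Measure.volumeIoiPow (finrank ℝ E - 1))) := by
    rw [← hpolar.integrable_comp_emb polar.measurableEmbedding, hG,
      ← integrableOn_iff_comap_subtypeVal (measurableSet_singleton _).compl]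
    exact hg.integrableOn
  calc ∫ v, g v ∂μ
    _ = ∫ x : ({0}ᶜ : Set E), G (polar x) ∂μ.comap (↑) := by
        nth_rw 1 [← restrict_compl_singleton (μ := μ) (0 : E),
          ← integral_subtype_comap (measurableSet_singleton _).compl g]
        exact congrArg (integral _) hG.symm
    _ = ∫ r : Ioi (0 : ℝ), ∫ u : sphere (0 : E) 1, g ((r : ℝ) • (u : E)) ∂μ.toSphere
          ∂Measure.volumeIoiPow (finrank ℝ E - 1) := by
        rw [hpolar.integral_comp polar.measurableEmbedding, integral_prod_symm _ hGint]
    _ = _ := by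
        simp only [Measure.volumeIoiPow, ENNReal.ofReal]
        rw [integral_withDensity_eq_integral_smul
            (measurable_subtype_coe.pow_const _).real_toNNReal,
          integral_subtype_comap measurableSet_Ioi fun r : ℝ => (r ^ (finrank ℝ E - 1)).toNNReal •
            ∫ u : sphere (0 : E) 1, g (r • (u : E)) ∂μ.toSphere]
        refine setIntegral_congr_fun measurableSet_Ioi fun r (hr : 0 < r) => ?_
        rw [NNReal.smul_def, Real.coe_toNNReal _ (by positivity)]

theorem hasFDerivAt_integral_mul_comp_add {w f : E → ℝ} {C : NNReal} (hw : LipschitzWith C w)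
    (hw_supp : HasCompactSupport w) (hf : LocallyIntegrable f μ) (x : E) :
    HasFDerivAt (fun y => ∫ v, w v * f (y + v) ∂μ) (-∫ v, f (x + v) • fderiv ℝ w v ∂μ) x := by
  have translate (y : E) : ∫ v, w v * f (y + v) ∂μ = ∫ z, w (z - y) * f z ∂μ := by
    simpa using integral_add_left_eq_self (μ := μ) (fun z => w (z - y) * f z) y
  have translate' : -∫ v, f (x + v) • fderiv ℝ w v ∂μ = ∫ z, -(f z • fderiv ℝ w (z - x)) ∂μ := by
    rw [integral_neg]
    simpa using integral_add_left_eq_self (μ := μ) (fun z => f z • fderiv ℝ w (z - x)) x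
  obtain ⟨r, -, hr⟩ := hw_supp.exists_pos_le_norm
  have w_eq_zero {y z : E} (hy : y ∈ ball x 1) (hz : z ∉ closedBall x (r + 1)) : w (z - y) = 0 := by
    rw [mem_closedBall, not_le] at hz
    refine hr _ ?_
    rw [← dist_eq_norm]
    linarith only [dist_triangle z y x, mem_ball.1 hy, hz]
  simp_rw [translate, translate']
  refine (hasFDerivAt_integral_of_dominated_loc_of_lip (ball_mem_nhds x one_pos)
    (bound := (closedBall x (r + 1)).indicator fun z => C * ‖f z‖) ?_ ?_ ?_ ?_ ?_ ?_).2
  · exact .of_forall fun y => (hw.continuous.comp (continuous_id.sub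
      continuous_const)).aestronglyMeasurable.mul hf.aestronglyMeasurable
  · exact hf.integrable_smul_left_of_hasCompactSupport
      (hw.continuous.comp (continuous_id.sub continuous_const))
      (hw_supp.comp_homeomorph (Homeomorph.subRight x))
  · exact (hf.aestronglyMeasurable.smul ((measurable_fderiv ℝ w).comp
      (measurable_id.sub_const x)).aestronglyMeasurable).neg
  · refine .of_forall fun z => LipschitzOnWith.of_dist_le_mul fun y hy y' hy' => ?_
    by_cases hz : z ∈ closedBall x (r + 1)
    · rw [indicator_of_mem hz, Real.coe_nnabs, abs_of_nonneg (by positivity), Real.dist_eq,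
        ← sub_mul, abs_mul, ← Real.dist_eq, mul_right_comm, ← Real.norm_eq_abs,
        ← dist_sub_left z]
      exact mul_le_mul_of_nonneg_right (hw.dist_le_mul _ _) (norm_nonneg _)
    · simp [w_eq_zero hy hz, w_eq_zero hy' hz, hz]
  · exact (integrable_indicator_iff measurableSet_closedBall).2
      ((hf.integrableOn_isCompact (isCompact_closedBall x _)).norm.const_mul _)
  · have hdiff : ∀ᵐ z ∂μ, DifferentiableAt ℝ w (z - x) :=
      (measurePreserving_sub_right μ x).quasiMeasurePreserving.ae hw.ae_differentiableAt
    filter_upwards [hdiff] with z hz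
    simpa only [Function.comp_def, ContinuousLinearMap.comp_neg, ContinuousLinearMap.comp_id,
      smul_neg, id] using
      (hz.hasFDerivAt.comp x ((hasFDerivAt_id x).const_sub z)).mul_const (f z)

end NormedSpace

theorem tendstoUniformlyOnFilter_intervalAverage {X F : Type*} [TopologicalSpace X]
    [NormedAddCommGroup F] [NormedSpace ℝ F] [CompleteSpace F] {K : ℝ → X → F}
    (hK : Continuous (Function.uncurry K)) (a : ℝ) (x : X) :
    TendstoUniformlyOnFilter (fun b y => ⨍ r in a..b, K r y) (K a) (𝓝[≠] a) (𝓝 x) := by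
  set A : ℝ → X → F := fun b y => ∫ s in (0 : ℝ)..1, K (a + (b - a) * s) y
  have hA : Continuous (Function.uncurry A) :=
    intervalIntegral.continuous_parametric_intervalIntegral_of_continuous'
      (f := fun (p : ℝ × X) s => K (a + (p.1 - a) * s) p.2)
      (hK.comp (by fun_prop : Continuous fun q : (ℝ × X) × ℝ => (a + (q.1.1 - a) * q.2, q.1.2))) 0 1
  have hAa (y : X) : A a y = K a y := by simp [A]
  have hA_eq {b : ℝ} (hb : b ≠ a) (y : X) : A b y = ⨍ r in a..b, K r y := by
    rw [interval_average_eq, eq_inv_smul_iff₀ (sub_ne_zero.2 hb)]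
    simpa using intervalIntegral.smul_integral_comp_add_mul (a := 0) (b := 1) (K · y) (b - a) a
  have hlim : TendstoUniformlyOnFilter A (K a) (𝓝[≠] a) (𝓝 x) := by
    have : Tendsto (fun q : ℝ × X => (A a q.2, A q.1 q.2)) (𝓝 (a, x)) (𝓝 (A a x, A a x)) :=
      Continuous.tendsto' (by fun_prop) _ _ rfl
    simp only [hAa] at this
    rw [tendstoUniformlyOnFilter_iff_tendsto]
    exact (this.mono_right (nhds_le_uniformity _)).mono_left
      (nhds_prod_eq (x := a) (y := x) ▸ prod_mono_left _ nhdsWithin_le_nhds)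
  refine hlim.congr ?_
  filter_upwards [prod_mem_prod self_mem_nhdsWithin univ_mem] with q hq using hA_eq hq.1 q.2

section Tent

variable {E : Type*} [NormedAddCommGroup E]

/-- The cone of height `R` over the ball of radius `R`. It is a Lipschitz antiderivative in `R` of
the indicator function of that ball. -/
def tent (R : ℝ) (v : E) : ℝ := max (R - ‖v‖) 0

theorem tent_of_norm_le {R : ℝ} {v : E} (hv : ‖v‖ ≤ R) : tent R v = R - ‖v‖ :=
  max_eq_left (sub_nonneg.2 hv)

theorem tent_of_le_norm {R : ℝ} {v : E} (hv : R ≤ ‖v‖) : tent R v = 0 :=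
  max_eq_right (sub_nonpos.2 hv)

theorem lipschitzWith_tent (R : ℝ) : LipschitzWith 1 (tent R : E → ℝ) := by
  unfold tent
  simpa using ((LipschitzWith.const R).sub (lipschitzWith_one_norm (E := E))).max_const 0

theorem lipschitzWith_tent_left (v : E) : LipschitzWith 1 (fun R => tent R v) := by
  unfold tent
  simpa using (LipschitzWith.id.sub (LipschitzWith.const ‖v‖)).max_const 0

theorem hasCompactSupport_tent [ProperSpace E] (R : ℝ) : HasCompactSupport (tent R : E → ℝ) :=
  .intro (isCompact_closedBall 0 R) fun v hv => tent_of_le_norm (by simpa using hv : R < ‖v‖).le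

theorem hasDerivAt_tent_left {ρ : ℝ} {v : E} (hv : ‖v‖ ≠ ρ) :
    HasDerivAt (fun R => tent R v) ((closedBall 0 ρ).indicator 1 v) ρ := by
  rcases hv.lt_or_gt with h | h
  · rw [indicator_of_mem (by simpa using h.le), Pi.one_apply]
    refine ((hasDerivAt_id ρ).sub_const ‖v‖).congr_of_eventuallyEq ?_
    filter_upwards [eventually_gt_nhds h] with R hR using tent_of_norm_le hR.le
  · rw [indicator_of_notMem (by simpa using h)]
    refine (hasDerivAt_const ρ (0 : ℝ)).congr_of_eventuallyEq ?_
    filter_upwards [eventually_lt_nhds h] with R hR using tent_of_le_norm hR.le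

variable [NormedSpace ℝ E] [FiniteDimensional ℝ E] [MeasurableSpace E] [BorelSpace E]
  (μ : Measure E) [μ.IsAddHaarMeasure]

theorem ae_norm_ne {R : ℝ} (hR : R ≠ 0) : ∀ᵐ v ∂μ, ‖v‖ ≠ R := by
  filter_upwards [measure_eq_zero_iff_ae_notMem.1 (Measure.addHaar_sphere_of_ne_zero μ 0 hR)]
    with v hv
  simpa using hv

theorem hasDerivAt_integral_tent_mul {g : E → ℝ} (hg : LocallyIntegrable g μ) {ρ : ℝ}
    (hρ : ρ ≠ 0) :
    HasDerivAt (fun R => ∫ v, tent R v * g v ∂μ) (∫ v in closedBall 0 ρ, g v ∂μ) ρ := by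
  rw [← integral_indicator measurableSet_closedBall]
  refine (hasDerivAt_integral_of_dominated_loc_of_lip (ball_mem_nhds ρ one_pos)
    (bound := (closedBall (0 : E) (ρ + 1)).indicator fun v => ‖g v‖) ?_ ?_ ?_ ?_ ?_ ?_).2
  · exact .of_forall fun R =>
      (lipschitzWith_tent R).continuous.aestronglyMeasurable.mul hg.aestronglyMeasurable
  · exact hg.integrable_smul_left_of_hasCompactSupport (lipschitzWith_tent ρ).continuous
      (hasCompactSupport_tent ρ)
  · exact hg.aestronglyMeasurable.indicator measurableSet_closedBall
  · refine .of_forall fun v => LipschitzOnWith.of_dist_le_mul fun R hR S hS => ?_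
    by_cases hv : v ∈ closedBall 0 (ρ + 1)
    · rw [indicator_of_mem hv, Real.coe_nnabs, abs_norm, Real.dist_eq, ← sub_mul, abs_mul,
        ← Real.dist_eq, mul_comm, ← Real.norm_eq_abs]
      gcongr
      simpa using (lipschitzWith_tent_left v).dist_le_mul R S
    · have tent_eq_zero {R : ℝ} (hR : R ∈ ball ρ 1) : tent R v = 0 := by
        rw [mem_closedBall_zero_iff, not_le] at hv
        rw [Real.ball_eq_Ioo] at hR
        exact tent_of_le_norm (hR.2.trans hv).le
      simp [tent_eq_zero hR, tent_eq_zero hS, hv]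
  · exact (integrable_indicator_iff measurableSet_closedBall).2
      (hg.integrableOn_isCompact (isCompact_closedBall 0 _)).norm
  · filter_upwards [ae_norm_ne μ hρ] with v hv
    simpa [indicator, ite_mul] using (hasDerivAt_tent_left hv).mul_const (g v)

end Tent

section InnerProductSpace

variable {E : Type*} [NormedAddCommGroup E] [InnerProductSpace ℝ E]

theorem hasFDerivAt_norm_of_ne_zero {x : E} (hx : x ≠ 0) :
    HasFDerivAt (fun v : E => ‖v‖) (‖x‖⁻¹ • innerSL ℝ x) x := by
  have := (hasStrictFDerivAt_norm_sq x).hasFDerivAt.sqrt (by simpa using hx)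
  simp only [Real.sqrt_sq (norm_nonneg _)] at this
  convert this using 1
  ext v
  simp only [smul_apply, coe_innerSL_apply, smul_eq_mul, one_div, mul_inv_rev, nsmul_eq_mul,
    Nat.cast_ofNat]
  field_simp

theorem fderiv_tent {R : ℝ} {v : E} (hv : v ≠ 0) (hvR : ‖v‖ ≠ R) :
    fderiv ℝ (tent R) v = -(ball 0 R).indicator (fun v => ‖v‖⁻¹ • innerSL ℝ v) v := by
  rcases hvR.lt_or_gt with h | h
  · have : tent R =ᶠ[𝓝 v] fun v => R - ‖v‖ := by
      filter_upwards [continuous_norm.continuousAt.eventually_lt_const h] with v hv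
      exact tent_of_norm_le hv.le
    rw [this.fderiv_eq, ((hasFDerivAt_norm_of_ne_zero hv).const_sub R).fderiv,
      indicator_of_mem (by simpa using h)]
  · have : tent R =ᶠ[𝓝 v] fun _ => 0 := by
      filter_upwards [continuous_norm.continuousAt.eventually_const_lt h] with v hv
      exact tent_of_le_norm hv.le
    rw [this.fderiv_eq, fderiv_const_apply, indicator_of_notMem (by simpa using h.le), neg_zero]

variable [FiniteDimensional ℝ E] [MeasurableSpace E] [BorelSpace E]
  (μ : Measure E) [μ.IsAddHaarMeasure]

/-- The integral of the outward unit normal against `f` over the sphere of radius `r` about `x`,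
divided by `r ^ (finrank ℝ E - 1)` and viewed as the linear functional `h ↦ ∫ f(x + ru) ⟪u, h⟫`. -/
noncomputable def sphereFlux (f : E → ℝ) (r : ℝ) (x : E) : StrongDual ℝ E :=
  ∫ u : sphere (0 : E) 1, f (x + r • (u : E)) • innerSL ℝ (u : E) ∂μ.toSphere

variable {f : E → ℝ}

theorem continuous_sphereFlux (hf : Continuous f) :
    Continuous (Function.uncurry (sphereFlux μ f)) := by
  have hc : Continuous (Function.uncurry fun (p : ℝ × E) (u : sphere (0 : E) 1) =>
      f (p.2 + p.1 • (u : E)) • innerSL ℝ (u : E)) := by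
    unfold Function.uncurry
    fun_prop
  have := continuous_parametric_integral_of_continuous (μ := μ.toSphere) hc isCompact_univ
  rw [Measure.restrict_univ] at this
  exact this

theorem integral_ball_smul_inner_eq [Nontrivial E] (hf : Continuous f) {R : ℝ} (hR : 0 ≤ R)
    (x : E) :
    ∫ v in ball 0 R, f (x + v) • ‖v‖⁻¹ • innerSL ℝ v ∂μ =
      ∫ r in (0 : ℝ)..R, r ^ (finrank ℝ E - 1) • sphereFlux μ f r x := by
  set g : E → StrongDual ℝ E := fun v => f (x + v) • ‖v‖⁻¹ • innerSL ℝ v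
  have hg : IntegrableOn g (ball 0 R) μ := by
    have hfx : IntegrableOn (fun v => f (x + v)) (ball 0 R) μ :=
      ((by fun_prop : Continuous fun v => f (x + v)).continuousOn.integrableOn_compact
        (isCompact_closedBall 0 R)).mono_set ball_subset_closedBall
    have hg_meas : AEStronglyMeasurable g (μ.restrict (ball 0 R)) :=
      (by fun_prop : Measurable g).aestronglyMeasurable
    refine Integrable.mono hfx hg_meas (.of_forall fun v => ?_)
    simpa [g, norm_smul] using mul_le_of_le_one_right (abs_nonneg (f (x + v))) inv_mul_le_one
  have hsphere : ∀ r ∈ Ioi (0 : ℝ), r ^ (finrank ℝ E - 1) •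
      ∫ u : sphere (0 : E) 1, (ball 0 R).indicator g (r • (u : E)) ∂μ.toSphere =
        (Iio R).indicator (fun r => r ^ (finrank ℝ E - 1) • sphereFlux μ f r x) r := by
    intro r (hr : 0 < r)
    by_cases hrR : r < R
    · simp [indicator, norm_smul, abs_of_pos hr, hrR, g, sphereFlux, hr.ne', smul_smul]
    · simp [indicator, norm_smul, abs_of_pos hr, hrR]
  rw [← integral_indicator measurableSet_ball, integral_eq_integral_Ioi_integral_sphere μ
      ((integrable_indicator_iff measurableSet_ball).2 hg),
    setIntegral_congr_fun measurableSet_Ioi hsphere, setIntegral_indicator measurableSet_Iio,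
    Ioi_inter_Iio, intervalIntegral.integral_of_le hR, integral_Ioc_eq_integral_Ioo]

theorem hasFDerivAt_integral_tent_mul [Nontrivial E] (hf : Continuous f) {R : ℝ} (hR : 0 < R)
    (x : E) :
    HasFDerivAt (fun y => ∫ v, tent R v * f (y + v) ∂μ)
      (∫ r in (0 : ℝ)..R, r ^ (finrank ℝ E - 1) • sphereFlux μ f r x) x := by
  convert hasFDerivAt_integral_mul_comp_add μ (lipschitzWith_tent R) (hasCompactSupport_tent R)
    hf.locallyIntegrable x using 1
  rw [← integral_ball_smul_inner_eq μ hf hR.le, ← integral_indicator measurableSet_ball,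
    ← integral_neg]
  refine integral_congr_ae ?_
  filter_upwards [Measure.ae_ne μ 0, ae_norm_ne μ hR.ne'] with v hv hvR
  simp [fderiv_tent hv hvR, indicator]

theorem hasFDerivAt_setIntegral_closedBall_comp_add [Nontrivial E] (hf : Continuous f) {ρ : ℝ}
    (hρ : 0 < ρ) (x : E) :
    HasFDerivAt (fun y => ∫ v in closedBall 0 ρ, f (y + v) ∂μ)
      (ρ ^ (finrank ℝ E - 1) • sphereFlux μ f ρ x) x := by
  set P : ℝ → E → StrongDual ℝ E := fun r y => r ^ (finrank ℝ E - 1) • sphereFlux μ f r y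
  have hflux := continuous_sphereFlux μ hf
  have hP : Continuous (Function.uncurry P) := by
    unfold Function.uncurry at *
    fun_prop
  have hP_int (y : E) (a b : ℝ) : IntervalIntegrable (P · y) volume a b :=
    (hP.comp (by fun_prop : Continuous fun r : ℝ => (r, y))).intervalIntegrable a b
  set T : ℝ → E → ℝ := fun R y => ∫ v, tent R v * f (y + v) ∂μ
  refine hasFDerivAt_of_tendstoUniformlyOnFilter (l := 𝓝[≠] ρ)
    (f := fun R y => slope (T · y) ρ R) (f' := fun R y => ⨍ r in ρ..R, P r y)
    (tendstoUniformlyOnFilter_intervalAverage hP ρ x) ?_ (.of_forall fun y => ?_)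
  · have hpos : ∀ᶠ R in 𝓝[≠] ρ, 0 < R := nhdsWithin_le_nhds (eventually_gt_nhds hρ)
    filter_upwards [hpos.prod_inl (𝓝 x)] with ⟨R, y⟩ hR
    rw [interval_average_eq, ← intervalIntegral.integral_interval_sub_left
      (hP_int y 0 R) (hP_int y 0 ρ)]
    exact ((hasFDerivAt_integral_tent_mul μ hf hR y).sub
      (hasFDerivAt_integral_tent_mul μ hf hρ y)).const_smul (R - ρ)⁻¹
  · exact (hasDerivAt_integral_tent_mul μ
      (by fun_prop : Continuous fun v => f (y + v)).locallyIntegrable hρ.ne').tendsto_slope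

theorem toDual_integral_sphere (hf : Continuous f) (r : ℝ) (x : E) :
    InnerProductSpace.toDual ℝ E (∫ u : sphere (0 : E) 1, f (x + r • (u : E)) • (u : E)
      ∂μ.toSphere) = sphereFlux μ f r x := by
  have hint : Integrable (fun u : sphere (0 : E) 1 => f (x + r • (u : E)) • (u : E)) μ.toSphere :=
    (by fun_prop : Continuous _).integrable_of_hasCompactSupport (.of_compactSpace _)
  exact ((innerSL ℝ).integral_comp_comm hint).symm.trans (by simp [sphereFlux])

theorem hasGradientAt_setIntegral_closedBall_comp_add_smul [Nontrivial E] (hf : Continuous f)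
    {δ : ℝ} (hδ : δ ≠ 0) (x : E) :
    HasGradientAt (fun y => ∫ v in closedBall 0 1, f (y + δ • v) ∂μ)
      (δ⁻¹ • ∫ u : sphere (0 : E) 1, f (x + δ • (u : E)) • (u : E) ∂μ.toSphere) x := by
  set g : E → ℝ := fun y => f (δ • y)
  have hg_apply (y v : E) : g (δ⁻¹ • y + v) = f (y + δ • v) := by
    simp only [g, smul_add, smul_inv_smul₀ hδ]
  have hball := hasFDerivAt_setIntegral_closedBall_comp_add μ
    (by fun_prop : Continuous g) one_pos (δ⁻¹ • x)
  have hcomp := hball.comp x ((hasFDerivAt_id x).const_smul δ⁻¹)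
  simp only [Function.comp_def, hg_apply] at hcomp
  refine hasGradientAt_iff_hasFDerivAt.2 (hcomp.congr_fderiv ?_)
  rw [map_smul, toDual_integral_sphere μ hf]
  simp [sphereFlux, hg_apply]

theorem one_point_gradient_estimator_unbiased_general [Nontrivial E] (hf : Continuous f) {δ : ℝ}
    (hδ : δ ≠ 0) (x : E) :
    HasGradientAt (fun y => ⨍ v in closedBall 0 1, f (y + δ • v) ∂μ)
      (⨍ u : sphere (0 : E) 1, ((finrank ℝ E : ℝ) / δ * f (x + δ • (u : E))) • (u : E) ∂μ.toSphere)
      x := by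
  have hdim : (finrank ℝ E : ℝ) ≠ 0 := Nat.cast_ne_zero.2 finrank_pos.ne'
  have hball : μ.real (ball (0 : E) 1) = μ.real (closedBall 0 1) :=
    congrArg ENNReal.toReal (Measure.addHaar_closedBall_eq_addHaar_ball μ 0 1).symm
  have hsphere : ⨍ u : sphere (0 : E) 1, ((finrank ℝ E : ℝ) / δ * f (x + δ • (u : E))) • (u : E)
      ∂μ.toSphere = (μ.real (closedBall (0 : E) 1))⁻¹ • δ⁻¹ •
        ∫ u : sphere (0 : E) 1, f (x + δ • (u : E)) • (u : E) ∂μ.toSphere := by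
    simp_rw [average_eq, Measure.toSphere_real_apply_univ, hball, mul_smul, integral_smul,
      smul_smul]
    field_simp
  simp_rw [hsphere, setAverage_eq]
  refine hasGradientAt_iff_hasFDerivAt.2 ?_
  rw [map_smul]
  exact (hasGradientAt_setIntegral_closedBall_comp_add_smul μ hf hδ x).hasFDerivAt.const_smul
    (μ.real (closedBall (0 : E) 1))⁻¹

end InnerProductSpace

section EuclideanSpace

variable {d : ℕ} {F : Type*} [NormedAddCommGroup F] [NormedSpace ℝ F]

theorem integral_ballUniform (g : EuclideanSpace ℝ (Fin d) → F) :
    ∫ v, g v ∂ballUniform d = ⨍ v in closedBall 0 1, g v := by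
  rw [ballUniform, average, Measure.restrict_apply_univ]

theorem integral_sphereUniform (g : EuclideanSpace ℝ (Fin d) → F) :
    ∫ u, g u ∂sphereUniform d = ⨍ u : sphere (0 : EuclideanSpace ℝ (Fin d)) 1, g u
      ∂(volume : Measure (EuclideanSpace ℝ (Fin d))).toSphere :=
  (MeasurableEmbedding.subtype_coe isClosed_sphere.measurableSet).integral_map g

end EuclideanSpace

theorem continuous_of_abs_sub_le_mul_norm {E : Type*} [SeminormedAddCommGroup E] {f : E → ℝ} {L : ℝ}
    (hf : ∀ x y, |f x - f y| ≤ L * ‖x - y‖) : Continuous f := by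
  refine (LipschitzWith.of_dist_le_mul (K := L.toNNReal) fun x y => ?_).continuous
  rw [Real.dist_eq, dist_eq_norm]
  exact (hf x y).trans (by gcongr; exact Real.le_coe_toNNReal L)

/-- Unbiasedness of the one-point gradient estimator (Lemma 1, one-point case):
for Lipschitz and bounded `f` and `δ > 0`, the smoothed function
`f̌(x) = E_v[f(x + δv)]` (with `v` uniform on the unit ball) is differentiable and
`∇f̌(x) = E_u[(d/δ) f(x + δu) u]` (with `u` uniform on the unit sphere). -/
theorem one_point_gradient_estimator_unbiased
    (d : ℕ) (hd : 0 < d)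
    (f : EuclideanSpace ℝ (Fin d) → ℝ)
    (L : ℝ) (hlip : ∀ x y, |f x - f y| ≤ L * ‖x - y‖)
    (F : ℝ) (hbdd : ∀ x, |f x| ≤ F)
    (δ : ℝ) (hδ : 0 < δ) :
    Differentiable ℝ (fun y => ∫ v, f (y + δ • v) ∂(ballUniform d)) ∧
      ∀ x, gradient (fun y => ∫ v, f (y + δ • v) ∂(ballUniform d)) x =
        ∫ u, ((d : ℝ) / δ * f (x + δ • u)) • u ∂(sphereUniform d) := by
  have : Nonempty (Fin d) := ⟨⟨0, hd⟩⟩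
  have hgrad (x : EuclideanSpace ℝ (Fin d)) :
      HasGradientAt (fun y => ∫ v, f (y + δ • v) ∂(ballUniform d))
        (∫ u, ((d : ℝ) / δ * f (x + δ • u)) • u ∂(sphereUniform d)) x := by
    simpa only [integral_ballUniform, integral_sphereUniform, finrank_euclideanSpace_fin] using
      one_point_gradient_estimator_unbiased_general volume
        (continuous_of_abs_sub_le_mul_norm hlip) hδ.ne' x
  exact ⟨fun x => (hgrad x).differentiableAt, fun x => (hgrad x).gradient⟩
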